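/- Let x > 0 be real. For every real q ∈ (0, e^{−π}) one has 0 < z₄(q) < 1, and the function φ(q) = F₄(x, z₄(q)) / F₄(0, z₄(q)) satisfies (q·d/dq)³ φ(q) = x³ · θ₃(q)⁸ · (1 − 2λ(q)) · (4λ(q)(1−λ(q)))^x, where (q·d/dq)³ denotes the threefold application of the operator f(q) ↦ q·f′(q). -/

import Mathlib

open Real

/-- Jacobi theta null value `θ₂(q) = ∑_{n∈ℤ} q^{(n+1/2)²}`. -/
noncomputable def theta2 (q : ℝ) : ℝ := ∑' n : ℤ, q ^ (((n : ℝ) + 1 / 2) ^ 2)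

/-- Jacobi theta null value `θ₃(q) = ∑_{n∈ℤ} q^{n²}`. -/
noncomputable def theta3 (q : ℝ) : ℝ := ∑' n : ℤ, q ^ ((n : ℝ) ^ 2)

/-- Jacobi theta null value `θ₄(q) = ∑_{n∈ℤ} (−1)ⁿ q^{n²}`. -/
noncomputable def theta4 (q : ℝ) : ℝ := ∑' n : ℤ, (-1 : ℝ) ^ n * q ^ ((n : ℝ) ^ 2)

/-- The modular lambda function `λ(q) = θ₂(q)⁴/θ₃(q)⁴`. -/
noncomputable def modLambda (q : ℝ) : ℝ := theta2 q ^ 4 / theta3 q ^ 4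

/-- `z₄(q) = 4λ(q)(1−λ(q))`. -/
noncomputable def z4 (q : ℝ) : ℝ := 4 * modLambda q * (1 - modLambda q)

/-- `F₄(x,z) = ∑_{n=0}^∞ z^{n+x} · ((1/2+x)_n)³/((1+x)_n)³`. -/
noncomputable def F4 (x z : ℝ) : ℝ :=
  ∑' n : ℕ, z ^ ((n : ℝ) + x) *
    ((ascPochhammer ℝ n).eval (1 / 2 + x)) ^ 3 / ((ascPochhammer ℝ n).eval (1 + x)) ^ 3

/-- The differential operator `f ↦ q·f′(q)`. -/
noncomputable def qDeriv (f : ℝ → ℝ) : ℝ → ℝ := fun q => q * deriv f q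

/-- `σ₃(n)`, the sum of the cubes of the positive divisors of `n`. -/
def sigma3 (n : ℕ) : ℕ := ∑ d ∈ n.divisors, d ^ 3


lemma summ_e (e : ℤ → ℕ) (he : ∀ n, n.natAbs ≤ e n + 1) (r : ℝ) (h0 : 0 < r) (h1 : r < 1) :
    Summable (fun n : ℤ => r ^ (e n)) := by
  have h : Summable (fun n : ℤ => r ^ (n.natAbs)) := by
    apply Summable.of_nat_of_neg
    · simpa using summable_geometric_of_lt_one h0.le h1
    · simpa using summable_geometric_of_lt_one h0.le h1
  refine Summable.of_nonneg_of_le (fun n => by positivity) (fun n => ?_) (h.mul_left r⁻¹)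
  have := pow_le_pow_of_le_one h0.le h1.le (he n)
  rw [pow_succ] at this
  rw [inv_mul_eq_div, le_div_iff₀ h0]; exact this

lemma summ_e' (e : ℤ → ℕ) (he : ∀ n, n.natAbs ≤ e n + 1) (q : ℝ) (h1 : |q| < 1) :
    Summable (fun n : ℤ => |q| ^ (e n)) := by
  obtain ⟨r, hr, hr1⟩ := exists_between h1
  have h0 : 0 < r := lt_of_le_of_lt (abs_nonneg q) hr
  exact Summable.of_nonneg_of_le (fun n => by positivity) (fun n => by gcongr) (summ_e e he r h0 hr1)

lemma summ_e2 (e : ℤ → ℕ) (he : ∀ n, n.natAbs ≤ e n + 1) (q : ℝ) (h1 : |q| < 1) :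
    Summable (fun n : ℤ => q ^ (e n)) := by
  have := summ_e' e he q h1
  apply Summable.of_norm
  simpa using this

lemma analytic_e (e : ℤ → ℕ) (he : ∀ n, n.natAbs ≤ e n + 1) :
    AnalyticOnNhd ℝ (fun q : ℝ => ∑' n : ℤ, q ^ (e n)) (Set.Ioo (-1) 1) := by
  have hd : DifferentiableOn ℂ (fun w : ℂ => ∑' n : ℤ, w ^ (e n)) (Metric.ball 0 1) := by
    intro w hw
    rw [mem_ball_zero_iff] at hw
    obtain ⟨r, hr, hr1⟩ := exists_between hw
    have h0 : 0 < r := lt_of_le_of_lt (norm_nonneg w) hr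
    have : DifferentiableOn ℂ (fun w : ℂ => ∑' n : ℤ, w ^ (e n)) (Metric.ball 0 r) := by
      refine Complex.differentiableOn_tsum_of_summable_norm (summ_e e he r h0 hr1)
        (fun n => by fun_prop) Metric.isOpen_ball ?_
      intro n w hw
      rw [mem_ball_zero_iff] at hw
      rw [norm_pow]; gcongr
    exact (this.differentiableAt (Metric.isOpen_ball.mem_nhds (by simpa using hr))).differentiableWithinAt
  have ha := hd.analyticOnNhd Metric.isOpen_ball
  intro q hq
  have h1 := (ha (q : ℂ) (by simpa [abs_lt] using hq)).restrictScalars (𝕜 := ℝ)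
  have h2 : AnalyticAt ℝ ((fun w : ℂ => ∑' n : ℤ, w ^ (e n)) ∘ (fun q : ℝ => Complex.ofRealCLM q)) q :=
    AnalyticAt.comp (f := fun q : ℝ => Complex.ofRealCLM q) (by simpa using h1) (Complex.ofRealCLM.analyticAt q)
  have h3 := (Complex.reCLM.analyticAt _).comp h2
  convert h3 using 1
  ext t
  simp only [Function.comp, Complex.ofRealCLM_apply, Complex.reCLM_apply]
  rw [← Complex.ofReal_re (∑' n : ℤ, t ^ (e n))]
  push_cast
  rfl

noncomputable def PA (q : ℝ) : ℝ := ∑' n : ℤ, q ^ (n.natAbs ^ 2)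
noncomputable def PB (q : ℝ) : ℝ := ∑' n : ℤ, q ^ ((n * (n + 1)).toNat)

lemma heA (n : ℤ) : n.natAbs ≤ n.natAbs ^ 2 + 1 := by nlinarith
lemma heB (n : ℤ) : n.natAbs ≤ (n * (n + 1)).toNat + 1 := by
  have : |n| ≤ n * (n+1) + 1 := by
    rcases le_or_gt 0 n with h | h
    · rw [abs_of_nonneg h]; nlinarith
    · rw [abs_of_neg h]; nlinarith
  rw [Int.abs_eq_natAbs] at this
  omega
lemma nnB (n : ℤ) : 0 ≤ n * (n+1) := by
    rcases le_or_gt 0 n with h | h <;> nlinarith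

lemma PA_an : AnalyticOnNhd ℝ PA (Set.Ioo (-1) 1) := analytic_e _ heA
lemma PB_an : AnalyticOnNhd ℝ PB (Set.Ioo (-1) 1) := analytic_e _ heB

lemma split_sum (f : ℤ × ℤ → ℝ) (hf : Summable f) :
    ∑' p, f p = ∑' p : ℤ × ℤ, f (p.1 + p.2, p.1 - p.2) + ∑' p : ℤ × ℤ, f (p.1 + p.2 + 1, p.1 - p.2) := by
  let E : (ℤ × ℤ) ⊕ (ℤ × ℤ) → ℤ × ℤ := fun s => Sum.elim (fun p => (p.1 + p.2, p.1 - p.2))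
    (fun p => (p.1 + p.2 + 1, p.1 - p.2)) s
  have hb : Function.Bijective E := by
    constructor
    · rintro (⟨a, b⟩ | ⟨a, b⟩) (⟨c, d⟩ | ⟨c, d⟩) h <;>
      simp only [E, Sum.elim_inl, Sum.elim_inr, Prod.mk.injEq, Sum.inl.injEq, Sum.inr.injEq, reduceCtorEq] at h ⊢ <;> omega
    · rintro ⟨m, n⟩
      rcases Int.even_or_odd' (m + n) with ⟨k, hk | hk⟩
      · refine ⟨Sum.inl (k, m - k), ?_⟩
        simp only [E, Sum.elim_inl, Prod.mk.injEq]; omega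
      · refine ⟨Sum.inr (k, m - k - 1), ?_⟩
        simp only [E, Sum.elim_inr, Prod.mk.injEq]; omega
  let e := Equiv.ofBijective E hb
  rw [← e.tsum_eq f]
  have hs : Summable (fun s => f (e s)) := (e.summable_iff (f := f)).2 hf
  rw [Summable.tsum_sum (f := fun s => f (e s))]
  · rfl
  · exact hs.comp_injective Sum.inl_injective
  · exact hs.comp_injective Sum.inr_injective

lemma mulsum (f g : ℤ → ℝ) (hf : Summable (fun n => ‖f n‖)) (hg : Summable (fun n => ‖g n‖)) :
    (∑' n, f n) * (∑' n, g n) = ∑' p : ℤ × ℤ, f p.1 * g p.2 := tsum_mul_tsum_of_summable_norm hf hg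

lemma A_sq (q : ℝ) (h : |q| < 1) : PA q ^ 2 = PA (q^2) ^ 2 + q * PB (q^2) ^ 2 := by
  have h2 : |q^2| < 1 := by rw [abs_pow]; nlinarith [abs_nonneg q]
  have sA : ∀ q : ℝ, |q| < 1 → Summable (fun n : ℤ => ‖q ^ (n.natAbs ^ 2)‖) := fun q h => by
    simpa using summ_e' _ heA q h
  have sB : ∀ q : ℝ, |q| < 1 → Summable (fun n : ℤ => ‖q ^ ((n * (n + 1)).toNat)‖) := fun q h => by
    simpa using summ_e' _ heB q h
  simp only [sq (PA _), sq (PB _)]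
  unfold PA PB
  rw [mulsum _ _ (sA q h) (sA q h), mulsum _ _ (sA _ h2) (sA _ h2), mulsum _ _ (sB _ h2) (sB _ h2),
    split_sum _ (summable_mul_of_summable_norm (sA q h) (sA q h)), ← tsum_mul_left]
  congr 1
  · apply tsum_congr; rintro ⟨a, b⟩
    simp only [← pow_mul, ← pow_add]
    congr 1
    zify; simp only [sq_abs]; ring
  · apply tsum_congr; rintro ⟨a, b⟩
    simp only [← pow_mul, ← pow_add, ← pow_succ']
    congr 1
    zify; simp only [sq_abs, Int.toNat_of_nonneg (nnB _)]; ring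

lemma B_sq (q : ℝ) (h : |q| < 1) : PB q ^ 2 = 2 * PA (q^2) * PB (q^2) := by
  have h2 : |q^2| < 1 := by rw [abs_pow]; nlinarith [abs_nonneg q]
  have sA : ∀ q : ℝ, |q| < 1 → Summable (fun n : ℤ => ‖q ^ (n.natAbs ^ 2)‖) := fun q h => by
    simpa using summ_e' _ heA q h
  have sB : ∀ q : ℝ, |q| < 1 → Summable (fun n : ℤ => ‖q ^ ((n * (n + 1)).toNat)‖) := fun q h => by
    simpa using summ_e' _ heB q h
  have e1 : 2 * PA (q^2) * PB (q^2) = PB (q^2) * PA (q^2) + PA (q^2) * PB (q^2) := by ring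
  rw [e1]
  simp only [sq (PB _)]
  unfold PA PB
  rw [mulsum _ _ (sB q h) (sB q h), mulsum _ _ (sA _ h2) (sB _ h2), mulsum _ _ (sB _ h2) (sA _ h2),
    split_sum _ (summable_mul_of_summable_norm (sB q h) (sB q h))]
  congr 1
  · apply tsum_congr; rintro ⟨a, b⟩
    simp only [← pow_mul, ← pow_add]
    congr 1
    zify; simp only [sq_abs, Int.toNat_of_nonneg (nnB _)]; ring
  · rw [← ((Equiv.addRight (1:ℤ)).prodCongr (Equiv.refl ℤ)).tsum_eq (fun p : ℤ × ℤ => (q ^ 2) ^ p.1.natAbs ^ 2 * (q ^ 2) ^ (p.2 * (p.2 + 1)).toNat)]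
    apply tsum_congr; rintro ⟨a, b⟩
    simp only [← pow_mul, ← pow_add, Equiv.prodCongr_apply, Prod.map, Equiv.coe_addRight, Equiv.refl_apply]
    congr 1
    zify; simp only [sq_abs, Int.toNat_of_nonneg (nnB _)]; ring

lemma PA_pos (q : ℝ) (h0 : 0 ≤ q) (h1 : q < 1) : 0 < PA q := by
  have hs := summ_e2 _ heA q (by rwa [abs_of_nonneg h0])
  exact hs.tsum_pos (fun n => by positivity) 0 (by simp)

lemma PB_pos (q : ℝ) (h0 : 0 ≤ q) (h1 : q < 1) : 0 < PB q := by
  have hs := summ_e2 _ heB q (by rwa [abs_of_nonneg h0])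
  exact hs.tsum_pos (fun n => by positivity) 0 (by simp)

lemma PA_zero : PA 0 = 1 := by
  unfold PA
  rw [tsum_eq_single 0]
  · simp
  · intro n hn
    simp [hn]

lemma jacobi (q : ℝ) (h : |q| < 1) : PA q ^ 4 - PA (-q) ^ 4 = q * PB q ^ 4 := by
  have h1 := A_sq q h
  have h2 := A_sq (-q) (by rwa [abs_neg])
  have h3 := B_sq q h
  rw [neg_sq] at h2
  have e1 : PA q ^ 4 = (PA q ^ 2) ^ 2 := by ring
  have e2 : PA (-q) ^ 4 = (PA (-q) ^ 2) ^ 2 := by ring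
  have e3 : PB q ^ 4 = (PB q ^ 2) ^ 2 := by ring
  rw [e1, e2, e3, h1, h2, h3]; ring

lemma abs_sq_lt (q : ℝ) (h : |q| < 1) : |q^2| < 1 := by rw [abs_pow]; nlinarith [abs_nonneg q]

lemma C_dup (q : ℝ) (h : |q| < 1) : PA (-(q^2)) ^ 4 = PA q ^ 2 * PA (-q) ^ 2 := by
  have h1 := A_sq q h
  have h2 := A_sq (-q) (by rwa [abs_neg])
  have h3 := jacobi (q^2) (abs_sq_lt q h)
  rw [neg_sq] at h2
  rw [h1, h2]; linear_combination -h3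

lemma tendsto_iter (q : ℝ) (h0 : 0 ≤ q) (h1 : q < 1) :
    Filter.Tendsto (fun n : ℕ => q ^ (2 ^ n)) Filter.atTop (nhds 0) :=
  (tendsto_pow_atTop_nhds_zero_of_lt_one h0 h1).comp
    (tendsto_pow_atTop_atTop_of_one_lt (by norm_num : 1 < 2))

lemma iter_pos (q : ℝ) (h0 : 0 < q) (h1 : q < 1) (n : ℕ) : 0 < q ^ (2^n) ∧ q ^ (2^n) < 1 :=
  ⟨by positivity, pow_lt_one₀ h0.le h1 (by positivity)⟩

lemma iter_const (f : ℝ → ℝ) (hc : ContinuousAt f 0) (hf : ∀ q, 0 < q → q < 1 → f q = f (q^2))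
    (q : ℝ) (h0 : 0 < q) (h1 : q < 1) : f q = f 0 := by
  have hn : ∀ n : ℕ, f (q ^ (2^n)) = f q := by
    intro n
    induction n with
    | zero => simp
    | succ k ih =>
      rw [← ih, hf _ (iter_pos q h0 h1 k).1 (iter_pos q h0 h1 k).2, ← pow_mul, ← pow_succ]
  have ht := hc.tendsto.comp (tendsto_iter q h0.le h1)
  have : Filter.Tendsto (fun _ : ℕ => f q) Filter.atTop (nhds (f 0)) := by
    refine ht.congr (fun n => by simp [hn])
  exact tendsto_nhds_unique tendsto_const_nhds this

lemma PA_c (q : ℝ) (h : |q| < 1) : AnalyticAt ℝ PA q := PA_an q (by simpa [abs_lt] using h)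
lemma PB_c (q : ℝ) (h : |q| < 1) : AnalyticAt ℝ PB q := PB_an q (by simpa [abs_lt] using h)

lemma C_ne (q : ℝ) (h0 : 0 ≤ q) (h1 : q < 1) : PA (-q) ≠ 0 := by
  intro h
  have hn : ∀ n : ℕ, PA (-(q ^ (2^n))) = 0 := by
    intro n
    induction n with
    | zero => simpa using h
    | succ k ih =>
      have hh : |q ^ (2^k)| < 1 := by
        rw [abs_of_nonneg (by positivity)]
        exact pow_lt_one₀ h0 h1 (by positivity)
      have := C_dup _ hh
      rw [ih] at this
      rw [pow_succ, pow_mul]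
      have h4 : PA (-(q ^ 2 ^ k) ^ 2) ^ 4 = 0 := by rw [this]; ring
      exact pow_eq_zero_iff (by norm_num) |>.1 h4
  have h5 : Filter.Tendsto (fun n : ℕ => -(q ^ (2^n))) Filter.atTop (nhds 0) := by
    simpa using (tendsto_iter q h0 h1).neg
  have h6 := ((PA_c 0 (by simp)).continuousAt.tendsto).comp h5
  have h7 : Filter.Tendsto (fun _ : ℕ => (0:ℝ)) Filter.atTop (nhds (PA 0)) := by
    refine h6.congr (fun n => by simp [hn])
  have := tendsto_nhds_unique tendsto_const_nhds h7
  rw [PA_zero] at this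
  norm_num at this

lemma PA_ne (q : ℝ) (h : |q| < 1) : PA q ≠ 0 := by
  rw [abs_lt] at h
  rcases le_or_gt 0 q with h' | h'
  · exact (PA_pos q h' h.2).ne'
  · have := C_ne (-q) (by linarith) (by linarith)
    simpa using this

lemma hdA (q : ℝ) (h : |q| < 1) : HasDerivAt PA (deriv PA q) q :=
  (PA_c q h).differentiableAt.hasDerivAt
lemma hdB (q : ℝ) (h : |q| < 1) : HasDerivAt PB (deriv PB q) q :=
  (PB_c q h).differentiableAt.hasDerivAt

lemma nhds_abs (q : ℝ) (h : |q| < 1) : ∀ᶠ t in nhds q, |t| < 1 :=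
  continuous_abs.continuousAt.eventually (gt_mem_nhds h)

lemma comp_sq (f : ℝ → ℝ) (f' q : ℝ) (hf : HasDerivAt f f' (q^2)) :
    HasDerivAt (fun t => f (t^2)) (f' * (2 * q)) q := by
  have hp : HasDerivAt (fun t : ℝ => t^2) (2 * q) q := by simpa using hasDerivAt_pow 2 q
  exact HasDerivAt.comp (h₂ := f) (h := fun t : ℝ => t^2) q hf hp

lemma dA_sq (q : ℝ) (h : |q| < 1) : 2 * PA q * deriv PA q =
    4 * q * PA (q^2) * deriv PA (q^2) + PB (q^2)^2 + 4 * q^2 * PB (q^2) * deriv PB (q^2) := by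
  have h2 := abs_sq_lt q h
  have e1 := (hdA q h).pow 2
  have e2 := ((comp_sq _ _ q (hdA _ h2)).pow 2).add ((hasDerivAt_id q).mul ((comp_sq _ _ q (hdB _ h2)).pow 2))
  have e3 := e2.congr_of_eventuallyEq (f₁ := fun t => PA t ^ 2) (by
    filter_upwards [nhds_abs q h] with t ht
    simpa using A_sq t ht)
  have := e1.unique e3
  simp at this
  linear_combination this

lemma dB_sq (q : ℝ) (h : |q| < 1) : PB q * deriv PB q =
    2 * q * deriv PA (q^2) * PB (q^2) + 2 * q * PA (q^2) * deriv PB (q^2) := by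
  have h2 := abs_sq_lt q h
  have e1 := (hdB q h).pow 2
  have e2 := (((comp_sq _ _ q (hdA _ h2)).const_mul 2).mul (comp_sq _ _ q (hdB _ h2)))
  have e3 := e2.congr_of_eventuallyEq (f₁ := fun t => PB t ^ 2) (by
    filter_upwards [nhds_abs q h] with t ht
    simpa using B_sq t ht)
  have := e1.unique e3
  simp at this
  linear_combination this / 2

noncomputable def bA (q : ℝ) : ℝ := q * deriv PA q / PA q

/-- logarithmic derivative of `θ₂`. -/
lemma logder (q : ℝ) (h0 : 0 < q) (h1 : q < 1) :
    1 / 4 + q * deriv PB q / PB q - bA q = PA (-q) ^ 4 / 4 := by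
  have key := iter_const (fun q => (1 / 4 + q * deriv PB q / PB q - q * deriv PA q / PA q) / PA (-q) ^ 4)
    ?_ ?_ q h0 h1
  · simp only [PA_zero, neg_zero, zero_mul, zero_div] at key
    have hC := C_ne q h0.le h1
    unfold bA
    rw [div_eq_iff (by positivity)] at key
    rw [key]; ring
  · have a1 := PA_c 0 (by simp)
    have a2 := PB_c 0 (by simp)
    have a3 : ContinuousAt (fun q : ℝ => PA (-q)) 0 :=
      ContinuousAt.comp (g := PA) (by simpa using a1.continuousAt) continuous_neg.continuousAt
    have n1 : PA 0 ≠ 0 := PA_ne 0 (by simp)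
    have n2 : PB 0 ≠ 0 := (PB_pos 0 le_rfl one_pos).ne'
    have a4 := a1.continuousAt
    have a5 := a2.continuousAt
    have a6 := a1.deriv.continuousAt
    have a7 := a2.deriv.continuousAt
    refine ContinuousAt.div (((continuousAt_const).add ((continuousAt_id.mul a7).div a5 n2)).sub ((continuousAt_id.mul a6).div a4 n1)) (a3.pow 4) (by simpa using n1)
  · intro q h0 h1
    have h : |q| < 1 := by rwa [abs_of_pos h0]
    have h2 := abs_sq_lt q h
    have h2' : q^2 < 1 := by nlinarith
    have i1 := A_sq q h
    have i2 := A_sq (-q) (by rwa [abs_neg])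
    rw [neg_sq, neg_mul, ← sub_eq_add_neg] at i2
    have i3 := B_sq q h
    have d1 := dA_sq q h
    have d2 := dB_sq q h
    have c1 := C_dup q h
    have p1 := PA_pos q h0.le h1
    have p2 := PB_pos q h0.le h1
    have p3 := C_ne q h0.le h1
    have p4 := PA_pos (q^2) (by positivity) h2'
    have p5 := PB_pos (q^2) (by positivity) h2'
    have g1 : q * deriv PB q / PB q = q * (PB q * deriv PB q) / PB q ^ 2 := by field_simp
    have g2 : q * deriv PA q / PA q = q * (2 * PA q * deriv PA q) / (2 * PA q ^ 2) := by field_simp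
    have g3 : PA (-q) ^ 4 = (PA (-q) ^ 2)^2 := by ring
    have m1 : PA (q ^ 2) ^ 2 + q * PB (q ^ 2) ^ 2 ≠ 0 := by rw [← i1]; positivity
    have m2 : PA (q ^ 2) ^ 2 - q * PB (q ^ 2) ^ 2 ≠ 0 := by rw [← i2]; positivity
    rw [g1, g2, g3, c1, d1, d2, i1, i2, i3]
    generalize PA (q^2) = α at *
    generalize PB (q^2) = β at *
    field_simp
    ring

lemma b_dup (q : ℝ) (h0 : 0 < q) (h1 : q < 1) :
    bA q = 2 * bA (q^2) + q * PB q ^ 4 / 8 - q^2 * PB (q^2) ^ 4 / 2 := by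
  have h : |q| < 1 := by rwa [abs_of_pos h0]
  have h2' : q^2 < 1 := by nlinarith
  have i1 := A_sq q h
  have i2 := A_sq (-q) (by rwa [abs_neg])
  rw [neg_sq, neg_mul, ← sub_eq_add_neg] at i2
  have i3 := B_sq q h
  have d1 := dA_sq q h
  have c1 := C_dup q h
  have p1 := PA_pos q h0.le h1
  have p4 := PA_pos (q^2) (by positivity) h2'
  have p5 := PB_pos (q^2) (by positivity) h2'
  have l := logder (q^2) (by positivity) h2'
  rw [c1, i1, i2] at l
  have m1 : PA (q ^ 2) ^ 2 + q * PB (q ^ 2) ^ 2 ≠ 0 := by rw [← i1]; positivity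
  have g2 : bA q = q * (2 * PA q * deriv PA q) / (2 * PA q ^ 2) := by unfold bA; field_simp
  have g3 : PB q ^ 4 = (PB q ^ 2)^2 := by ring
  rw [g2, g3, d1, i1, i3]
  have k1 : q^2 * deriv PA (q^2) = bA (q^2) * PA (q^2) := by unfold bA; field_simp
  have k2 : q^2 * deriv PB (q^2) = PB (q^2) * (bA (q^2) + (PA (q ^ 2) ^ 2 + q * PB (q ^ 2) ^ 2) * (PA (q ^ 2) ^ 2 - q * PB (q ^ 2) ^ 2) / 4 - 1 / 4) := by
    rw [← l]; field_simp; ring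
  rw [div_eq_iff (by positivity)]
  linear_combination 4 * PA (q^2) * k1 + 4 * q * PB (q^2) * k2

lemma bA_an (q : ℝ) (h : |q| < 1) : AnalyticAt ℝ bA q :=
  (analyticAt_id.mul (PA_c q h).deriv).div (PA_c q h) (PA_ne q h)

lemma bA_d (q : ℝ) (h : |q| < 1) : HasDerivAt bA (deriv bA q) q :=
  (bA_an q h).differentiableAt.hasDerivAt

lemma dH (q : ℝ) (h0 : 0 < q) (h1 : q < 1) :
    HasDerivAt (fun t => t * PB t ^ 4) (PB q ^ 4 * (4 * bA q + PA (-q) ^ 4)) q := by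
  have h : |q| < 1 := by rwa [abs_of_pos h0]
  have l := logder q h0 h1
  have p2 := PB_pos q h0.le h1
  have := (hasDerivAt_id q).mul ((hdB q h).pow 4)
  refine HasDerivAt.congr_deriv this ?_
  have e : PA (-q) ^ 4 = 4 * (1 / 4 + q * deriv PB q / PB q - bA q) := by rw [l]; ring
  rw [e]
  simp
  field_simp
  ring

lemma db_dup (q : ℝ) (h0 : 0 < q) (h1 : q < 1) :
    deriv bA q = 4 * q * deriv bA (q^2) + PB q ^ 4 * (4 * bA q + PA (-q) ^ 4) / 8
      - q * PB (q^2) ^ 4 * (4 * bA (q^2) + PA (-(q^2)) ^ 4) := by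
  have h : |q| < 1 := by rwa [abs_of_pos h0]
  have h2' : q^2 < 1 := by nlinarith
  have h2 := abs_sq_lt q h
  have e1 := (((comp_sq _ _ q (bA_d _ h2)).const_mul 2).add ((dH q h0 h1).div_const 8)).sub
    ((comp_sq _ _ q (dH (q^2) (by positivity) h2')).div_const 2)
  have e3 := e1.congr_of_eventuallyEq (f₁ := bA) (by
    filter_upwards [lt_mem_nhds h0, gt_mem_nhds h1] with t ht ht'
    simpa using b_dup t ht ht')
  rw [e3.deriv]; ring

noncomputable def eA (q : ℝ) : ℝ := q * deriv bA q - 2 * bA q ^ 2 - q * PB q ^ 4 * PA (-q) ^ 4 / 8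

lemma e_dup (q : ℝ) (h0 : 0 < q) (h1 : q < 1) : eA q = 4 * eA (q^2) := by
  have h : |q| < 1 := by rwa [abs_of_pos h0]
  unfold eA
  rw [db_dup q h0 h1, b_dup q h0 h1, C_dup q h]
  have i1 := A_sq q h
  have i2 := A_sq (-q) (by rwa [abs_neg])
  rw [neg_sq, neg_mul, ← sub_eq_add_neg] at i2
  have i3 := B_sq q h
  have e1 : PB q ^ 4 = (PB q ^ 2)^2 := by ring
  have e2 : PA (-q) ^ 4 = (PA (-q) ^ 2)^2 := by ring
  rw [e1, e2, i1, i2, i3]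
  ring

lemma e_zero (q : ℝ) (h0 : 0 < q) (h1 : q < 1) : eA q = 0 := by
  have a0 : AnalyticAt ℝ eA 0 := by
    have z : |(0:ℝ)| < 1 := by simp
    have a1 : AnalyticAt ℝ (fun q : ℝ => PA (-q)) 0 :=
      AnalyticAt.comp (g := PA) (f := fun q : ℝ => -q) (by simpa using PA_c 0 z) (analyticAt_id.neg)
    exact ((analyticAt_id.mul (bA_an 0 z).deriv).sub (analyticAt_const.mul ((bA_an 0 z).pow 2))).sub
      (((analyticAt_id.mul ((PB_c 0 z).pow 4)).mul (a1.pow 4)).div_const)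
  have v0 : eA 0 = 0 := by simp [eA, bA]
  have hO := a0.differentiableAt.isBigO_sub
  obtain ⟨K, hK⟩ := hO.bound
  simp only [v0, sub_zero] at hK
  have hn : ∀ n : ℕ, eA q = 4^n * eA (q ^ (2^n)) := by
    intro n
    induction n with
    | zero => simp
    | succ k ih =>
      rw [ih, e_dup _ (iter_pos q h0 h1 k).1 (iter_pos q h0 h1 k).2, ← pow_mul, ← pow_succ]; ring
  have t1 := (tendsto_pow_const_mul_const_pow_of_lt_one 2 h0.le h1).comp
    (tendsto_pow_atTop_atTop_of_one_lt (by norm_num : 1 < 2))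
  have t2 := t1.const_mul K
  rw [mul_zero] at t2
  have t3 : |eA q| ≤ 0 := by
    refine ge_of_tendsto t2 ?_
    filter_upwards [(tendsto_iter q h0.le h1).eventually hK] with n hh
    rw [hn n, abs_mul, abs_of_pos (by positivity : (0:ℝ) < 4^n)]
    have p := (iter_pos q h0 h1 n).1
    rw [Real.norm_eq_abs, Real.norm_eq_abs, abs_of_pos p] at hh
    calc (4:ℝ)^n * |eA (q ^ 2^n)| ≤ 4^n * (K * q ^ 2^n) := by gcongr
      _ = _ := by
        simp only [Function.comp]
        push_cast
        rw [← pow_mul, mul_comm n 2, pow_mul]; norm_num; ring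
  exact abs_eq_zero.1 (le_antisymm t3 (abs_nonneg _))

lemma db (q : ℝ) (h0 : 0 < q) (h1 : q < 1) :
    HasDerivAt bA ((2 * bA q ^ 2 + q * PB q ^ 4 * PA (-q) ^ 4 / 8) / q) q := by
  have h : |q| < 1 := by rwa [abs_of_pos h0]
  convert bA_d q h using 1
  have := e_zero q h0 h1
  unfold eA at this
  rw [div_eq_iff h0.ne']; linear_combination -this

/-- polynomially bounded coefficient sequences -/
def Adm (c : ℕ → ℝ) : Prop := ∃ (C : ℝ) (k : ℕ), 0 ≤ C ∧ ∀ n : ℕ, |c n| ≤ C * ((n : ℝ) + 1) ^ k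

lemma Adm.mul_add {c : ℕ → ℝ} (h : Adm c) (x : ℝ) (hx : 0 ≤ x) : Adm (fun n => ((n : ℝ) + x) * c n) := by
  obtain ⟨C, k, hC, h⟩ := h
  refine ⟨C * (1 + x), k + 1, by positivity, fun n => ?_⟩
  rw [abs_mul, abs_of_nonneg (by positivity)]
  calc ((n:ℝ) + x) * |c n| ≤ ((1 + x) * (n + 1)) * (C * ((n : ℝ) + 1) ^ k) := by
        gcongr
        · nlinarith [(Nat.cast_nonneg n : (0:ℝ) ≤ n), mul_nonneg hx (Nat.cast_nonneg n : (0:ℝ) ≤ n)]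
        · exact h n
    _ = _ := by ring

lemma Adm.summ {c : ℕ → ℝ} (h : Adm c) (r : ℝ) (hr0 : 0 < r) (hr1 : r < 1) :
    Summable (fun n => |c n| * r ^ n) := by
  obtain ⟨C, k, hC, h⟩ := h
  have h1 : Summable (fun n : ℕ => (n : ℝ) ^ k * r ^ n) :=
    summable_pow_mul_geometric_of_norm_lt_one k (by rwa [Real.norm_eq_abs, abs_of_pos hr0])
  have h2 := ((summable_nat_add_iff 1).2 h1).mul_left (C / r)
  refine Summable.of_nonneg_of_le (fun n => by positivity) (fun n => ?_) h2
  calc |c n| * r ^ n ≤ (C * ((n : ℝ) + 1) ^ k) * r ^ n := by gcongr; exact h n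
    _ = _ := by push_cast; rw [pow_succ]; field_simp

noncomputable def SS (c : ℕ → ℝ) (z : ℝ) : ℝ := ∑' n : ℕ, c n * z ^ n

lemma Adm.summ' {c : ℕ → ℝ} (h : Adm c) (z : ℝ) (hz : |z| < 1) :
    Summable (fun n => c n * z ^ n) := by
  obtain ⟨r, hr, hr1⟩ := exists_between hz
  have h0 : 0 < r := lt_of_le_of_lt (abs_nonneg z) hr
  apply Summable.of_norm
  refine Summable.of_nonneg_of_le (fun n => by positivity) (fun n => ?_) (h.summ r h0 hr1)
  rw [norm_mul, norm_pow, Real.norm_eq_abs, Real.norm_eq_abs]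
  gcongr

lemma SS_deriv0 {c : ℕ → ℝ} (h : Adm c) (z : ℝ) (hz : |z| < 1) :
    HasDerivAt (SS c) (∑' n : ℕ, c n * (n * z ^ (n - 1))) z := by
  obtain ⟨r, hr, hr1⟩ := exists_between hz
  have h0 : 0 < r := lt_of_le_of_lt (abs_nonneg z) hr
  have hs := ((h.mul_add 0 le_rfl).summ r h0 hr1).mul_left r⁻¹
  refine hasDerivAt_tsum_of_isPreconnected (t := Metric.ball (0:ℝ) r) (y₀ := 0) (g := fun n z => c n * z ^ n) (g' := fun n z => c n * (n * z ^ (n - 1)))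
    hs Metric.isOpen_ball
    (convex_ball _ _).isPreconnected ?_ ?_ (by simpa using h0) (h.summ' 0 (by simp)) (by simpa using hr)
  · intro n y hy
    exact (hasDerivAt_pow n y).const_mul (c n)
  · intro n y hy
    rw [mem_ball_zero_iff, Real.norm_eq_abs] at hy
    rcases n with _ | n
    · simp
    · rw [norm_mul, norm_mul, norm_pow, Real.norm_eq_abs, Real.norm_eq_abs, Real.norm_eq_abs, abs_mul, add_zero, Nat.add_sub_cancel, pow_succ]
      calc |c (n+1)| * (|((n+1 : ℕ) : ℝ)| * |y| ^ n) ≤ |c (n+1)| * (|((n+1 : ℕ) : ℝ)| * r ^ n) := by gcongr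
        _ = _ := by field_simp

lemma SS_deriv {c : ℕ → ℝ} (h : Adm c) (z : ℝ) (hz0 : 0 < z) (hz : z < 1) :
    HasDerivAt (SS c) (SS (fun n => ((n : ℝ) + 0) * c n) z / z) z := by
  convert SS_deriv0 h z (by rwa [abs_of_pos hz0]) using 1
  unfold SS
  rw [← tsum_div_const]
  apply tsum_congr
  intro n
  rcases n with _ | n
  · simp
  · rw [Nat.add_sub_cancel, pow_succ]; field_simp; ring

lemma SS_zero (c : ℕ → ℝ) : SS c 0 = c 0 := by
  unfold SS
  rw [tsum_eq_single 0]
  · simp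
  · intro n hn; simp [hn]

lemma SS_tendsto {c : ℕ → ℝ} (h : Adm c) : Filter.Tendsto (SS c) (nhds 0) (nhds (c 0)) := by
  have := (SS_deriv0 h 0 (by simp)).continuousAt.tendsto
  rwa [SS_zero] at this

noncomputable def VV (x : ℝ) (c : ℕ → ℝ) (z : ℝ) : ℝ := z ^ x * SS c z

/-- multiplication of coefficients by `n + x` -/
noncomputable def ms (x : ℝ) (c : ℕ → ℝ) : ℕ → ℝ := fun n => ((n : ℝ) + x) * c n

lemma SS_ms (x : ℝ) {c : ℕ → ℝ} (h : Adm c) (z : ℝ) (hz0 : 0 < z) (hz : z < 1) :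
    SS (ms x c) z = SS (fun n => ((n : ℝ) + 0) * c n) z + x * SS c z := by
  have hz' : |z| < 1 := by rwa [abs_of_pos hz0]
  unfold SS
  rw [← tsum_mul_left, ← ((h.mul_add 0 le_rfl).summ' z hz').tsum_add ((h.summ' z hz').mul_left x)]
  apply tsum_congr; intro n; unfold ms; ring

lemma VV_deriv {x : ℝ} (hx : 0 ≤ x) {c : ℕ → ℝ} (h : Adm c) (z : ℝ) (hz0 : 0 < z) (hz : z < 1) :
    HasDerivAt (VV x c) (VV x (ms x c) z / z) z := by
  have h1 := (Real.hasDerivAt_rpow_const (p := x) (Or.inl hz0.ne')).mul (SS_deriv h z hz0 hz)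
  refine h1.congr_deriv ?_
  unfold VV
  rw [SS_ms x h z hz0 hz, Real.rpow_sub_one hz0.ne']
  field_simp
  ring

noncomputable def cc (x : ℝ) (n : ℕ) : ℝ :=
  ((ascPochhammer ℝ n).eval (1 / 2 + x)) ^ 3 / ((ascPochhammer ℝ n).eval (1 + x)) ^ 3

lemma cc_zero (x : ℝ) : cc x 0 = 1 := by simp [cc]

lemma poch_pos (y : ℝ) (hy : 0 < y) (n : ℕ) : 0 < (ascPochhammer ℝ n).eval y := ascPochhammer_pos n y hy

lemma cc_rec (x : ℝ) (hx : 0 ≤ x) (n : ℕ) : ((n : ℝ) + 1 + x) ^ 3 * cc x (n+1) = ((n:ℝ) + x + 1/2)^3 * cc x n := by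
  have h1 := poch_pos (1 + x) (by linarith) n
  unfold cc
  rw [ascPochhammer_succ_eval, ascPochhammer_succ_eval]
  have : (1 + x + n) ≠ 0 := by positivity
  field_simp
  ring

lemma cc_pos (x : ℝ) (hx : 0 ≤ x) (n : ℕ) : 0 < cc x n := by
  have h1 := poch_pos (1 + x) (by linarith) n
  have h2 := poch_pos (1 / 2 + x) (by linarith) n
  unfold cc; positivity

lemma cc_le (x : ℝ) (hx : 0 ≤ x) (n : ℕ) : cc x n ≤ 1 := by
  induction n with
  | zero => rw [cc_zero]
  | succ n ih =>
    have h := cc_rec x hx n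
    have h1 := cc_pos x hx n
    have h3 : ((n:ℝ) + x + 1/2)^3 ≤ ((n : ℝ) + 1 + x) ^ 3 := by
      gcongr ?_ ^ 3; linarith
    have h4 : 0 < ((n : ℝ) + 1 + x) ^ 3 := by positivity
    by_contra hc
    push Not at hc
    have : ((n : ℝ) + 1 + x) ^ 3 * 1 < ((n : ℝ) + 1 + x) ^ 3 * cc x (n+1) := by gcongr
    nlinarith [mul_le_mul h3 ih h1.le h4.le]

lemma cc_adm (x : ℝ) (hx : 0 ≤ x) : Adm (cc x) :=
  ⟨1, 0, zero_le_one, fun n => by rw [abs_of_pos (cc_pos x hx n)]; simpa using cc_le x hx n⟩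

lemma ms_adm {x : ℝ} (hx : 0 ≤ x) {c : ℕ → ℝ} (h : Adm c) : Adm (ms x c) := h.mul_add x hx

lemma F4_eq (x : ℝ) (z : ℝ) (hz0 : 0 < z) : F4 x z = VV x (cc x) z := by
  unfold F4 VV SS
  rw [← tsum_mul_left]
  apply tsum_congr; intro n
  rw [Real.rpow_add hz0, Real.rpow_natCast, cc]; ring

lemma ode (x : ℝ) (hx : 0 ≤ x) (z : ℝ) (hz0 : 0 < z) (hz : z < 1) :
    (1 - z) * VV x (ms x (ms x (ms x (cc x)))) z = 3 / 2 * z * VV x (ms x (ms x (cc x))) z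
      + 3 / 4 * z * VV x (ms x (cc x)) z + z / 8 * VV x (cc x) z + x ^ 3 * z ^ x := by
  have hz' : |z| < 1 := by rwa [abs_of_pos hz0]
  have a0 := cc_adm x hx
  have a1 := ms_adm hx a0
  have a2 := ms_adm hx a1
  have a3 := ms_adm hx a2
  have key : SS (ms x (ms x (ms x (cc x)))) z = x ^ 3 + z * (SS (ms x (ms x (ms x (cc x)))) z + 3 / 2 * SS (ms x (ms x (cc x))) z
      + 3 / 4 * SS (ms x (cc x)) z + 1 / 8 * SS (cc x) z) := by
    have hs := ((((a3.summ' z hz').hasSum.add ((a2.summ' z hz').hasSum.mul_left (3/2))).add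
      ((a1.summ' z hz').hasSum.mul_left (3/4))).add ((a0.summ' z hz').hasSum.mul_left (1/8))).mul_left z
    have : SS (ms x (ms x (ms x (cc x)))) z = x ^ 3 + ∑' n, ms x (ms x (ms x (cc x))) (n+1) * z ^ (n+1) := by
      unfold SS
      rw [(a3.summ' z hz').tsum_eq_zero_add]
      simp [ms, cc_zero]; ring
    refine this.trans ?_
    congr 1
    unfold SS
    rw [← hs.tsum_eq]
    apply tsum_congr; intro n
    have := cc_rec x hx n
    simp only [ms]
    push_cast
    rw [pow_succ]
    linear_combination z ^ n * z * this
  unfold VV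
  linear_combination z ^ x * key

lemma const_lemma (f : ℝ → ℝ) (r c : ℝ) (hd : ∀ z, 0 < z → z < r → HasDerivAt f 0 z)
    (ht : Filter.Tendsto f (nhdsWithin 0 (Set.Ioi 0)) (nhds c)) (z : ℝ) (h0 : 0 < z) (h1 : z < r) : f z = c := by
  have hc : ∀ y, 0 < y → y < r → f y = f z := by
    intro y hy hy'
    refine (convex_Ioo (0:ℝ) r).is_const_of_fderivWithin_eq_zero (𝕜 := ℝ) (f := f) ?_ ?_ ⟨hy, hy'⟩ ⟨h0, h1⟩
    · intro t ht; exact (hd t ht.1 ht.2).differentiableAt.differentiableWithinAt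
    · intro t ht
      have := (hd t ht.1 ht.2).hasFDerivAt.hasFDerivWithinAt (s := Set.Ioo 0 r)
      rw [this.fderivWithin (isOpen_Ioo.uniqueDiffWithinAt ht)]
      ext; simp
  have h2 : Filter.Tendsto (fun _ : ℝ => f z) (nhdsWithin 0 (Set.Ioi 0)) (nhds c) := by
    refine ht.congr' ?_
    filter_upwards [Ioo_mem_nhdsGT (h0.trans h1)] with t ht
    exact hc t ht.1 ht.2
  exact tendsto_nhds_unique tendsto_const_nhds h2

lemma VV_tendsto {c : ℕ → ℝ} (h : Adm c) : Filter.Tendsto (VV 0 c) (nhds 0) (nhds (c 0)) := by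
  have : VV 0 c = SS c := by ext z; simp [VV]
  rw [this]; exact SS_tendsto h

lemma G_zero (z : ℝ) (h0 : 0 < z) (h1 : z < 1) :
    2 * (1 - z) * VV 0 (cc 0) z * VV 0 (ms 0 (ms 0 (cc 0))) z - (1 - z) * VV 0 (ms 0 (cc 0)) z ^ 2
      - z * VV 0 (cc 0) z * VV 0 (ms 0 (cc 0)) z - z / 4 * VV 0 (cc 0) z ^ 2 = 0 := by
  have a0 := cc_adm 0 le_rfl
  have a1 := ms_adm le_rfl a0
  have a2 := ms_adm le_rfl a1
  have a3 := ms_adm le_rfl a2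
  refine const_lemma (fun z => 2 * (1 - z) * VV 0 (cc 0) z * VV 0 (ms 0 (ms 0 (cc 0))) z - (1 - z) * VV 0 (ms 0 (cc 0)) z ^ 2
      - z * VV 0 (cc 0) z * VV 0 (ms 0 (cc 0)) z - z / 4 * VV 0 (cc 0) z ^ 2) 1 0 ?_ ?_ z h0 h1
  · intro z h0 h1
    have d0 := VV_deriv le_rfl a0 z h0 h1
    have d1 := VV_deriv le_rfl a1 z h0 h1
    have d2 := VV_deriv le_rfl a2 z h0 h1
    have o := ode 0 le_rfl z h0 h1
    have i := hasDerivAt_id z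
    have j := (hasDerivAt_const z (1:ℝ)).sub i
    have := (((((j.const_mul 2).mul d0).mul d2).sub (j.mul (d1.pow 2))).sub ((i.mul d0).mul d1)).sub ((i.div_const 4).mul (d0.pow 2))
    refine HasDerivAt.congr_deriv this ?_
    simp
    field_simp
    simp at o
    linear_combination 8 * VV 0 (cc 0) z * o
  · have t0 := (VV_tendsto a0).mono_left (nhdsWithin_le_nhds (s := Set.Ioi 0))
    have t1 := (VV_tendsto a1).mono_left (nhdsWithin_le_nhds (s := Set.Ioi 0))
    have t2 := (VV_tendsto a2).mono_left (nhdsWithin_le_nhds (s := Set.Ioi 0))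
    have i : Filter.Tendsto (fun z : ℝ => z) (nhdsWithin 0 (Set.Ioi 0)) (nhds 0) := nhdsWithin_le_nhds
    have j := (tendsto_const_nhds (x := (1:ℝ))).sub i
    have := (((((j.const_mul 2).mul t0).mul t2).sub (j.mul (t1.pow 2))).sub ((i.mul t0).mul t1)).sub ((i.div_const 4).mul (t0.pow 2))
    simpa [ms] using this

lemma f0_pos (z : ℝ) (h0 : 0 < z) (h1 : z < 1) : 0 < VV 0 (cc 0) z := by
  have : VV 0 (cc 0) z = SS (cc 0) z := by simp [VV]
  rw [this]
  refine ((cc_adm 0 le_rfl).summ' z (by rwa [abs_of_pos h0])).tsum_pos (fun n => ?_) 0 ?_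
  · have := cc_pos 0 le_rfl n; positivity
  · simp [cc_zero]

noncomputable def lam (q : ℝ) : ℝ := q * PB q ^ 4 / PA q ^ 4

lemma theta3_eq (q : ℝ) : theta3 q = PA q := by
  unfold theta3 PA
  apply tsum_congr; intro n
  rw [← Real.rpow_natCast q (n.natAbs ^ 2)]; congr 1; push_cast; rw [Nat.cast_natAbs]; push_cast; rw [sq_abs]

lemma theta2_eq (q : ℝ) (h0 : 0 < q) : theta2 q = q ^ (1/4 : ℝ) * PB q := by
  unfold theta2 PB
  rw [← tsum_mul_left]
  apply tsum_congr; intro n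
  rw [← Real.rpow_natCast q (n * (n+1)).toNat, ← Real.rpow_add h0]; congr 1
  have : (((n * (n+1)).toNat : ℕ) : ℝ) = ((n * (n+1) : ℤ) : ℝ) := by
    exact_mod_cast Int.toNat_of_nonneg (nnB n)
  rw [this]; push_cast; ring

lemma lam_eq (q : ℝ) (h0 : 0 < q) : modLambda q = lam q := by
  unfold modLambda lam
  rw [theta3_eq, theta2_eq q h0, mul_pow, ← Real.rpow_natCast, ← Real.rpow_mul h0.le]
  norm_num

lemma one_sub_lam (q : ℝ) (h0 : 0 < q) (h1 : q < 1) : 1 - lam q = PA (-q) ^ 4 / PA q ^ 4 := by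
  have p1 := PA_pos q h0.le h1
  have := jacobi q (by rwa [abs_of_pos h0])
  unfold lam
  field_simp
  linarith

lemma lam_pos (q : ℝ) (h0 : 0 < q) (h1 : q < 1) : 0 < lam q := by
  have p1 := PA_pos q h0.le h1
  have p2 := PB_pos q h0.le h1
  unfold lam; positivity

lemma lam_lt (q : ℝ) (h0 : 0 < q) (h1 : q < 1) : 0 < 1 - lam q := by
  have p1 := PA_pos q h0.le h1
  have p2 := C_ne q h0.le h1
  rw [one_sub_lam q h0 h1]; positivity

lemma dT (q : ℝ) (h0 : 0 < q) (h1 : q < 1) :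
    HasDerivAt (fun t => PA t ^ 4) (4 * bA q * PA q ^ 4 / q) q := by
  have p1 := PA_pos q h0.le h1
  refine ((hdA q (by rwa [abs_of_pos h0])).pow 4).congr_deriv ?_
  unfold bA
  field_simp
  norm_num
  ring

lemma dlam (q : ℝ) (h0 : 0 < q) (h1 : q < 1) :
    HasDerivAt lam (lam q * (1 - lam q) * PA q ^ 4 / q) q := by
  have p1 := PA_pos q h0.le h1
  refine ((dH q h0 h1).div (dT q h0 h1) (by positivity)).congr_deriv ?_
  rw [one_sub_lam q h0 h1]
  unfold lam
  field_simp
  ring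

lemma db' (q : ℝ) (h0 : 0 < q) (h1 : q < 1) :
    HasDerivAt bA ((2 * bA q ^ 2 + lam q * (1 - lam q) * (PA q ^ 4) ^ 2 / 8) / q) q := by
  have p1 := PA_pos q h0.le h1
  refine (db q h0 h1).congr_deriv ?_
  rw [one_sub_lam q h0 h1]
  unfold lam
  field_simp

lemma lam_mono : StrictMonoOn lam (Set.Ioo 0 1) := by
  apply strictMonoOn_of_deriv_pos (convex_Ioo _ _)
  · intro t ht; exact (dlam t ht.1 ht.2).continuousAt.continuousWithinAt
  · intro t ht
    rw [interior_Ioo] at ht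
    rw [(dlam t ht.1 ht.2).deriv]
    have p1 := PA_pos t ht.1.le ht.2
    have := lam_pos t ht.1 ht.2
    have := lam_lt t ht.1 ht.2
    have := ht.1
    positivity

lemma poisson : theta2 (Real.exp (-π)) = PA (-Real.exp (-π)) := by
  have h := Complex.tsum_exp_neg_quadratic (a := 1) (by simp) (Complex.I / 2)
  have e1 : ((PA (-Real.exp (-π)) : ℝ) : ℂ) = ∑' n : ℤ, Complex.exp (-π * 1 * n ^ 2 + 2 * π * (Complex.I / 2) * n) := by
    unfold PA
    push_cast
    apply tsum_congr; intro n
    rw [Complex.exp_add]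
    have a1 : Complex.exp (2 * π * (Complex.I / 2) * n) = (-1) ^ (n.natAbs ^ 2) := by
      have : (2 * π * (Complex.I / 2) * n : ℂ) = n * (π * Complex.I) := by ring
      rw [this, Complex.exp_int_mul, Complex.exp_pi_mul_I]
      rcases Int.even_or_odd n with hn | hn
      · rw [hn.neg_one_zpow, Even.neg_one_pow]
        rw [Nat.even_pow]; exact ⟨Int.natAbs_even.2 hn, by norm_num⟩
      · rw [hn.neg_one_zpow, Odd.neg_one_pow]
        exact (Int.natAbs_odd.2 hn).pow
    rw [a1, neg_pow, mul_comm, ← Complex.exp_nat_mul]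
    congr 2
    push_cast
    have : ((n.natAbs : ℂ)) ^ 2 = (n : ℂ) ^ 2 := by
      rw [Nat.cast_natAbs, ← Int.cast_pow, sq_abs, Int.cast_pow]
    rw [this]; ring
  have e2 : ((theta2 (Real.exp (-π)) : ℝ) : ℂ) = ∑' n : ℤ, Complex.exp (-π / 1 * (n + Complex.I * (Complex.I / 2)) ^ 2) := by
    unfold theta2
    rw [← (Equiv.addRight (1:ℤ)).tsum_eq (fun n : ℤ => Complex.exp (-π / 1 * (n + Complex.I * (Complex.I / 2)) ^ 2))]
    push_cast
    apply tsum_congr; intro n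
    rw [← Real.exp_mul]
    push_cast
    congr 1
    simp only [Equiv.coe_addRight]
    push_cast
    have : Complex.I * (Complex.I / 2) = -1/2 := by
      rw [← mul_div_assoc, Complex.I_mul_I]
    rw [this]; ring
  rw [← e1, ← e2] at h
  simp at h
  exact_mod_cast h.symm

lemma lam_half : lam (Real.exp (-π)) = 1 / 2 := by
  have h0 := Real.exp_pos (-π)
  have h1 : Real.exp (-π) < 1 := by rw [Real.exp_lt_one_iff]; linarith [Real.pi_pos]
  have a := one_sub_lam _ h0 h1
  have b := lam_eq _ h0
  unfold modLambda at b
  rw [poisson, theta3_eq] at b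
  linarith

lemma lam_lt_half (q : ℝ) (h0 : 0 < q) (h1 : q < Real.exp (-π)) : lam q < 1 / 2 := by
  rw [← lam_half]
  have h2 : Real.exp (-π) < 1 := by rw [Real.exp_lt_one_iff]; linarith [Real.pi_pos]
  exact lam_mono ⟨h0, h1.trans h2⟩ ⟨Real.exp_pos _, h2⟩ h1

noncomputable def zz (q : ℝ) : ℝ := 4 * lam q * (1 - lam q)

lemma exp_lt : Real.exp (-π) < 1 := by rw [Real.exp_lt_one_iff]; linarith [Real.pi_pos]

lemma zz_mem (q : ℝ) (h0 : 0 < q) (h1 : q < Real.exp (-π)) : 0 < zz q ∧ zz q < 1 := by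
  have a := lam_pos q h0 (h1.trans exp_lt)
  have b := lam_lt_half q h0 h1
  unfold zz
  constructor
  · have : 0 < 1 - lam q := by linarith
    positivity
  · nlinarith [mul_pos (sub_pos.2 b) (sub_pos.2 b)]

lemma dzz (q : ℝ) (h0 : 0 < q) (h1 : q < 1) :
    HasDerivAt zz (zz q * (1 - 2 * lam q) * PA q ^ 4 / q) q := by
  have d := dlam q h0 h1
  have := (d.const_mul 4).mul ((hasDerivAt_const q (1:ℝ)).sub d)
  refine HasDerivAt.congr_deriv this ?_
  simp only [zz, Pi.sub_apply]
  field_simp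
  ring

lemma dV (x : ℝ) (hx : 0 ≤ x) {c : ℕ → ℝ} (hc : Adm c) (q : ℝ) (h0 : 0 < q) (h1 : q < Real.exp (-π)) :
    HasDerivAt (fun t => VV x c (zz t)) ((1 - 2 * lam q) * PA q ^ 4 * VV x (ms x c) (zz q) / q) q := by
  have hz := zz_mem q h0 h1
  have h := HasDerivAt.comp (h₂ := VV x c) (h := zz) q (VV_deriv hx hc (zz q) hz.1 hz.2) (dzz q h0 (h1.trans exp_lt))
  refine HasDerivAt.congr_deriv h ?_
  have := hz.1.ne'
  field_simp

lemma lam_t : Filter.Tendsto lam (nhds 0) (nhds 0) := by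
  have a := (PA_c 0 (by simp)).continuousAt
  have b := (PB_c 0 (by simp)).continuousAt
  have : ContinuousAt lam 0 := (continuousAt_id.mul (b.pow 4)).div (a.pow 4) (by simp [PA_zero])
  have h := this.tendsto
  rwa [show lam 0 = 0 by simp [lam]] at h

lemma PA_t : Filter.Tendsto PA (nhds 0) (nhds 1) := by
  have a := (PA_c 0 (by simp)).continuousAt.tendsto
  rwa [PA_zero] at a

lemma bA_t : Filter.Tendsto bA (nhds 0) (nhds 0) := by
  have a := (bA_an 0 (by simp)).continuousAt.tendsto
  rwa [show bA 0 = 0 by simp [bA]] at a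

lemma zz_t : Filter.Tendsto zz (nhds 0) (nhds 0) := by
  have := (lam_t.const_mul 4).mul ((tendsto_const_nhds (x := (1:ℝ))).sub lam_t)
  have e : zz = fun q => 4 * lam q * (1 - lam q) := rfl
  rw [e]
  simpa using this

lemma M_zero (q : ℝ) (h0 : 0 < q) (h1 : q < Real.exp (-π)) :
    4 * bA q * VV 0 (cc 0) (zz q) - (1 - 2 * lam q) * PA q ^ 4 * VV 0 (ms 0 (cc 0)) (zz q) = 0 := by
  have a0 := cc_adm 0 le_rfl
  have a1 := ms_adm le_rfl a0
  have key := const_lemma (fun q => (4 * bA q * VV 0 (cc 0) (zz q) - (1 - 2 * lam q) * PA q ^ 4 * VV 0 (ms 0 (cc 0)) (zz q)) ^ 2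
    / (PA q ^ 4 * VV 0 (cc 0) (zz q))) (Real.exp (-π)) 0 ?_ ?_ q h0 h1
  · have hz := zz_mem q h0 h1
    have p1 := f0_pos _ hz.1 hz.2
    have p2 := PA_pos q h0.le (h1.trans exp_lt)
    rw [div_eq_zero_iff] at key
    rcases key with h | h
    · exact pow_eq_zero_iff (by norm_num) |>.1 h
    · exact absurd h (by positivity)
  · intro q h0 h1
    have h1' := h1.trans exp_lt
    have hz := zz_mem q h0 h1
    have p1 := f0_pos _ hz.1 hz.2
    have p2 := PA_pos q h0.le h1'
    have d0 := dV 0 le_rfl a0 q h0 h1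
    have d1 := dV 0 le_rfl a1 q h0 h1
    have dl := dlam q h0 h1'
    have db := db' q h0 h1'
    have dt := dT q h0 h1'
    have g := G_zero _ hz.1 hz.2
    have M := ((db.const_mul 4).mul d0).sub ((((hasDerivAt_const q (1:ℝ)).sub (dl.const_mul 2)).mul dt).mul d1)
    have tot := (M.pow 2).div (dt.mul d0) (mul_pos (pow_pos p2 4) p1).ne'
    refine HasDerivAt.congr_deriv tot ?_
    simp only [Pi.sub_apply, Pi.mul_apply, Pi.pow_apply]
    generalize VV 0 (cc 0) (zz q) = h at *
    generalize VV 0 (ms 0 (cc 0)) (zz q) = h' at *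
    generalize VV 0 (ms 0 (ms 0 (cc 0))) (zz q) = h'' at *
    generalize PA q = A at *
    generalize bA q = b at *
    simp only [zz] at g
    generalize lam q = l at *
    rw [div_eq_zero_iff]; left
    field_simp
    push_cast
    linear_combination (-(4 * b * h - (1 - 2 * l) * A ^ 4 * h') * 8 * A^12) * g
  · have s : nhdsWithin (0:ℝ) (Set.Ioi 0) ≤ nhds 0 := nhdsWithin_le_nhds
    have t0 := ((VV_tendsto a0).comp zz_t)
    have t1 := ((VV_tendsto a1).comp zz_t)
    have := ((((bA_t.const_mul 4).mul t0).sub ((((tendsto_const_nhds (x := (1:ℝ))).sub (lam_t.const_mul 2)).mul (PA_t.pow 4)).mul t1)).pow 2).div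
      ((PA_t.pow 4).mul t0) (by simp [cc_zero])
    have := this.mono_left s
    simp only [cc_zero, ms] at this
    convert this using 1
    · rfl
    · norm_num

lemma f0_eq (q : ℝ) (h0 : 0 < q) (h1 : q < Real.exp (-π)) : VV 0 (cc 0) (zz q) = PA q ^ 4 := by
  have a0 := cc_adm 0 le_rfl
  have key := const_lemma (fun q => VV 0 (cc 0) (zz q) / PA q ^ 4) (Real.exp (-π)) 1 ?_ ?_ q h0 h1
  · have p2 := PA_pos q h0.le (h1.trans exp_lt)
    rwa [div_eq_one_iff_eq (by positivity)] at key
  · intro q h0 h1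
    have h1' := h1.trans exp_lt
    have p2 := PA_pos q h0.le h1'
    refine ((dV 0 le_rfl a0 q h0 h1).div (dT q h0 h1') (by positivity)).congr_deriv ?_
    have m := M_zero q h0 h1
    rw [div_eq_zero_iff]; left
    field_simp
    linear_combination -PA q ^ 4 * m
  · have s : nhdsWithin (0:ℝ) (Set.Ioi 0) ≤ nhds 0 := nhdsWithin_le_nhds
    have t0 := ((VV_tendsto a0).comp zz_t)
    have := (t0.div (PA_t.pow 4) (by simp)).mono_left s
    simp only [cc_zero, one_pow, div_one] at this
    exact this

lemma qD (f g : ℝ → ℝ) (g' q : ℝ) (h0 : 0 < q) (h1 : q < Real.exp (-π))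
    (hfg : ∀ t, 0 < t → t < Real.exp (-π) → f t = g t) (hg : HasDerivAt g (g' / q) q) : qDeriv f q = g' := by
  have : HasDerivAt f (g' / q) q := hg.congr_of_eventuallyEq (by
    filter_upwards [lt_mem_nhds h0, gt_mem_nhds h1] with t ht ht'
    exact hfg t ht ht')
  unfold qDeriv
  rw [this.deriv]; field_simp

lemma zz_eq (q : ℝ) (h0 : 0 < q) : z4 q = zz q := by
  unfold z4 zz; rw [lam_eq q h0]

lemma step1 (x : ℝ) (hx : 0 ≤ x) (q : ℝ) (h0 : 0 < q) (h1 : q < Real.exp (-π)) :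
    qDeriv (fun t => F4 x (z4 t) / F4 0 (z4 t)) q =
      (1 - 2 * lam q) * VV x (ms x (cc x)) (zz q) - 4 * bA q * VV x (cc x) (zz q) / PA q ^ 4 := by
  refine qD _ (fun t => VV x (cc x) (zz t) / PA t ^ 4) _ q h0 h1 ?_ ?_
  · intro t ht ht'
    rw [zz_eq t ht, F4_eq _ _ (zz_mem t ht ht').1, F4_eq _ _ (zz_mem t ht ht').1, f0_eq t ht ht']
  · have h1' := h1.trans exp_lt
    have p2 := PA_pos q h0.le h1'
    refine ((dV x hx (cc_adm x hx) q h0 h1).div (dT q h0 h1') (by positivity)).congr_deriv ?_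
    field_simp

lemma step2 (x : ℝ) (hx : 0 ≤ x) (q : ℝ) (h0 : 0 < q) (h1 : q < Real.exp (-π)) :
    qDeriv (qDeriv (fun t => F4 x (z4 t) / F4 0 (z4 t))) q =
      (1 - 2 * lam q) ^ 2 * PA q ^ 4 * VV x (ms x (ms x (cc x))) (zz q)
      - (2 * lam q * (1 - lam q) * PA q ^ 4 + 4 * bA q * (1 - 2 * lam q)) * VV x (ms x (cc x)) (zz q)
      + (8 * bA q ^ 2 / PA q ^ 4 - lam q * (1 - lam q) * PA q ^ 4 / 2) * VV x (cc x) (zz q) := by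
  refine qD _ _ _ q h0 h1 (step1 x hx) ?_
  have h1' := h1.trans exp_lt
  have p2 := PA_pos q h0.le h1'
  have a0 := cc_adm x hx
  have a1 := ms_adm hx a0
  have d0 := dV x hx a0 q h0 h1
  have d1 := dV x hx a1 q h0 h1
  have dl := dlam q h0 h1'
  have db := db' q h0 h1'
  have dt := dT q h0 h1'
  have := (((hasDerivAt_const q (1:ℝ)).sub (dl.const_mul 2)).mul d1).sub (((db.const_mul 4).mul d0).div dt (by positivity))
  refine HasDerivAt.congr_deriv this ?_
  simp only [Pi.sub_apply, Pi.mul_apply]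
  field_simp
  ring

lemma step3 (x : ℝ) (hx : 0 ≤ x) (q : ℝ) (h0 : 0 < q) (h1 : q < Real.exp (-π)) :
    qDeriv (qDeriv (qDeriv (fun t => F4 x (z4 t) / F4 0 (z4 t)))) q =
      x ^ 3 * PA q ^ 8 * (1 - 2 * lam q) * zz q ^ x := by
  refine qD _ _ _ q h0 h1 (step2 x hx) ?_
  have h1' := h1.trans exp_lt
  have p2 := PA_pos q h0.le h1'
  have hz := zz_mem q h0 h1
  have a0 := cc_adm x hx
  have a1 := ms_adm hx a0
  have a2 := ms_adm hx a1
  have d0 := dV x hx a0 q h0 h1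
  have d1 := dV x hx a1 q h0 h1
  have d2 := dV x hx a2 q h0 h1
  have dl := dlam q h0 h1'
  have db := db' q h0 h1'
  have dt := dT q h0 h1'
  have o := ode x hx _ hz.1 hz.2
  have ds := (hasDerivAt_const q (1:ℝ)).sub (dl.const_mul 2)
  have ds1 := (hasDerivAt_const q (1:ℝ)).sub dl
  have := ((((ds.pow 2).mul dt).mul d2).sub (((((dl.const_mul 2).mul ds1).mul dt).add ((db.const_mul 4).mul ds)).mul d1)).add
    (((((db.pow 2).const_mul 8).div dt (by positivity)).sub (((dl.mul ds1).mul dt).div_const 2)).mul d0)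
  refine HasDerivAt.congr_deriv this ?_
  simp only [Pi.sub_apply, Pi.mul_apply, Pi.pow_apply, Pi.add_apply, Pi.div_apply]
  generalize zz q ^ x = w at *
  generalize VV x (cc x) (zz q) = u at *
  generalize VV x (ms x (cc x)) (zz q) = u1 at *
  generalize VV x (ms x (ms x (cc x))) (zz q) = u2 at *
  generalize VV x (ms x (ms x (ms x (cc x)))) (zz q) = u3 at *
  simp only [zz] at o
  generalize PA q = A at *
  generalize bA q = b at *
  generalize lam q = l at *
  have hw : x ^ 3 * w = (1 - 4 * l * (1 - l)) * u3 - (3 / 2 * (4 * l * (1 - l)) * u2 + 3 / 4 * (4 * l * (1 - l)) * u1 + (4 * l * (1 - l)) / 8 * u) := by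
    linear_combination -o
  have e : x ^ 3 * A ^ 8 * (1 - 2 * l) * w = (x ^ 3 * w) * A ^ 8 * (1 - 2 * l) := by ring
  rw [e, hw]
  field_simp
  push_cast
  ring


theorem stmt_1 (x : ℝ) (hx : 0 < x) :
    ∀ q ∈ Set.Ioo (0 : ℝ) (Real.exp (-π)),
      (0 < z4 q ∧ z4 q < 1) ∧
      qDeriv (qDeriv (qDeriv (fun t => F4 x (z4 t) / F4 0 (z4 t)))) q =
        x ^ 3 * theta3 q ^ 8 * (1 - 2 * modLambda q) *
          (4 * modLambda q * (1 - modLambda q)) ^ x := by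
  intro q hq
  have h0 := hq.1
  have h1 := hq.2
  refine ⟨by rw [zz_eq q h0]; exact zz_mem q h0 h1, ?_⟩
  rw [step3 x hx.le q h0 h1, theta3_eq, lam_eq q h0]
  rfl
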